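/- If a contract satisfies the incentive compatibility constraints and θ_i > θ_j, then p_i ≥ p_j. -/

import Mathlib

section IncentiveCompatibility

variable {ι R : Type*} {s : Set ι} {θ p t : ι → R}

/-- The incentive compatibility constraints of a contract `k ↦ (p k, t k)` offered to the types
in `s`: an agent of type `k` who takes the item `(p j, t j)` spends the power `p j` for the reward
`t j`, with utility `θ k * t j - p j`, and this is largest for the item designed for type `k`.
The set `s` allows contracts indexed by part of `ι`, such as `1, …, K` in `ℕ`. -/
def IsIncentiveCompatibleOn [Mul R] [Sub R] [LE R] (s : Set ι) (θ p t : ι → R) : Prop :=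
  ∀ ⦃k⦄, k ∈ s → ∀ ⦃j⦄, j ∈ s → θ k * t j - p j ≤ θ k * t k - p k

namespace IsIncentiveCompatibleOn

section OrderedAddMonoid

variable [Ring R] [PartialOrder R] [IsOrderedAddMonoid R]

theorem mul_sub_le_sub (h : IsIncentiveCompatibleOn s θ p t) {i j : ι} (hi : i ∈ s) (hj : j ∈ s) :
    θ i * (t j - t i) ≤ p j - p i := by
  rw [mul_sub, sub_le_sub_iff, add_comm (p j), ← sub_le_sub_iff]
  exact h hi hj

theorem sub_le_mul_sub (h : IsIncentiveCompatibleOn s θ p t) {i j : ι} (hi : i ∈ s) (hj : j ∈ s) :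
    p j - p i ≤ θ j * (t j - t i) := by
  simpa only [← mul_neg, neg_sub] using neg_le_neg (h.mul_sub_le_sub hj hi)

end OrderedAddMonoid

theorem monovaryOn_reward [Ring R] [LinearOrder R] [IsStrictOrderedRing R]
    (h : IsIncentiveCompatibleOn s θ p t) : MonovaryOn t θ s := by
  intro i hi j hj hθ
  have hmul : θ i * (t j - t i) ≤ θ j * (t j - t i) :=
    (h.mul_sub_le_sub hi hj).trans (h.sub_le_mul_sub hi hj)
  have hprod : 0 ≤ (θ j - θ i) * (t j - t i) := by
    rwa [sub_mul, sub_nonneg]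
  exact sub_nonneg.mp (nonneg_of_mul_nonneg_right hprod (sub_pos.mpr hθ))

end IsIncentiveCompatibleOn

theorem ic_higher_type_more_power_general [Ring R] [LinearOrder R] [IsStrictOrderedRing R]
    (h : IsIncentiveCompatibleOn s θ p t) (hθ : ∀ k ∈ s, 0 ≤ θ k) : MonovaryOn p θ s := by
  intro i hi j hj hij
  have ht : 0 ≤ t j - t i := sub_nonneg.mpr (h.monovaryOn_reward hi hj hij)
  exact sub_nonneg.mp ((mul_nonneg (hθ i hi) ht).trans (h.mul_sub_le_sub hi hj))

end IncentiveCompatibility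

/-- If a contract satisfies the incentive compatibility constraints and `θ i > θ j`,
then `p i ≥ p j`. -/
theorem ic_higher_type_more_power
    (K : ℕ) (hK : 1 ≤ K) (θ p t : ℕ → ℝ)
    (hθpos : ∀ k, 1 ≤ k → k ≤ K → 0 < θ k)
    (hθmono : ∀ i j, 1 ≤ i → i < j → j ≤ K → θ i < θ j)
    (hp : ∀ k, 1 ≤ k → k ≤ K → 0 ≤ p k)
    (ht : ∀ k, 1 ≤ k → k ≤ K → 0 ≤ t k)
    (hIC : ∀ k j, 1 ≤ k → k ≤ K → 1 ≤ j → j ≤ K →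
      θ k * t k - p k ≥ θ k * t j - p j) :
    ∀ i j, 1 ≤ i → i ≤ K → 1 ≤ j → j ≤ K → θ i > θ j → p i ≥ p j := by
  intro i j hi hiK hj hjK hij
  exact ic_higher_type_more_power_general (s := Set.Icc 1 K)
    (fun k hk l hl ↦ hIC k l hk.1 hk.2 hl.1 hl.2) (fun k hk ↦ (hθpos k hk.1 hk.2).le)
    ⟨hj, hjK⟩ ⟨hi, hiK⟩ hij
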